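/- For integers k ≥ 1 and n ≥ 2k, the weights satisfy ∑_{d=0}^{k} w_d = 0, with w_d > 0 for every 1 ≤ d ≤ k and w_0 < 0. Equivalently, the combinatorial identity ∑_{d=0}^{k} C(2k,d) C(2k−d,d) C(2k−2d,k−d) / C(n−2k+d,d) = C(n,k) C(2k,k) / C(n−k,k) holds. -/

import Mathlib

/-!
Statement 7: the weights satisfy `∑_{d=0}^k w_d = 0`, `w_d > 0` for `1 ≤ d ≤ k`,
`w_0 < 0`, and equivalently the combinatorial identity
`∑_{d=0}^k M_{d,k}/N_d = C(n,k) C(2k,k) / C(n-k,k)`.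
-/

open Finset

noncomputable section

/-- `M_{d,k}`, the number of ordered pairs of `k`-subsets of a `2k`-set
with intersection of size `d`. -/
def Mdk (k d : ℕ) : ℕ :=
  (2 * k).choose d * (2 * k - d).choose d * (2 * k - 2 * d).choose (k - d)

/-- `N_d = C(n - 2k + d, d)`. -/
def Nd (n k d : ℕ) : ℕ := (n - 2 * k + d).choose d

/-- The weights `w_d`. -/
def wgt (n k d : ℕ) : ℝ :=
  if d = 0 then
    ((n.choose k : ℝ)⁻¹ - ((n - k).choose k : ℝ)⁻¹) * (n.choose k : ℝ)⁻¹ *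
      (n.choose (2 * k) : ℝ) * ((2 * k).choose k : ℝ)
  else
    (n.choose (2 * k) : ℝ) * ((n.choose k : ℝ)⁻¹) ^ 2 * (Mdk k d : ℝ) / (Nd n k d : ℝ)

/-!
Counting the pairs by choosing one of the two sets first, instead of their intersection, gives
`M_{d,k} = C(2k,k) C(k,d)²`. Since `C(n-2k+d,d) = C(n-k-(k-d),d)`, trinomial revision turns
`C(k,d) / N_d` into `C(n-k,k-d) / C(n-k,k)`, so Vandermonde's convolution evaluates
`∑ M_{d,k} / N_d` as `C(2k,k) C(n,k) / C(n-k,k)`. Up to the common factor `C(n,2k) C(n,k)⁻²`,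
the weight `w_d` is the `d`-th term of this sum, with the value of the whole sum subtracted from
the term `d = 0`. Hence the weights sum to zero, and positivity of the others forces `w_0 < 0`.
-/

lemma choose_mul_choose_sub_comm (n a b : ℕ) :
    n.choose a * (n - a).choose b = n.choose b * (n - b).choose a := by
  have hab := Nat.choose_mul (n := n) (Nat.le_add_right a b)
  have hba := Nat.choose_mul (n := n) (Nat.le_add_left b a)
  rw [Nat.add_sub_cancel_left] at hab
  rw [Nat.add_sub_cancel] at hba
  rw [← hab, ← hba, Nat.choose_symm_add]

lemma choose_mul_choose_sub_mul_choose_sub (n e : ℕ) {d k : ℕ} (hdk : d ≤ k) :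
    n.choose d * (n - d).choose e * (n - d - e).choose (k - d) =
      n.choose k * k.choose d * (n - k).choose e := by
  rw [Nat.choose_mul hdk, mul_assoc, mul_assoc, choose_mul_choose_sub_comm (n - d),
    tsub_tsub_tsub_cancel_right hdk]

lemma sum_choose_mul_choose_sub (a b k : ℕ) :
    ∑ d ∈ range (k + 1), a.choose d * b.choose (k - d) = (a + b).choose k := by
  rw [Nat.add_choose_eq, Nat.sum_antidiagonal_eq_sum_range_succ_mk]

section Field

variable {K : Type*} [Field K] [CharZero K]

lemma choose_div_choose_sub {N k d : ℕ} (hdk : d ≤ k) (hkN : k ≤ N) :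
    (k.choose d : K) / ((N - (k - d)).choose d : K) =
      (N.choose (k - d) : K) / (N.choose k : K) := by
  have hden : ((N - (k - d)).choose d : K) ≠ 0 :=
    Nat.cast_ne_zero.mpr (Nat.choose_ne_zero (by omega))
  have hNk : (N.choose k : K) ≠ 0 := Nat.cast_ne_zero.mpr (Nat.choose_ne_zero hkN)
  have revision := Nat.choose_mul (n := N) (Nat.sub_le k d)
  rw [Nat.choose_symm hdk, Nat.sub_sub_self hdk] at revision
  rw [div_eq_div_iff hden hNk, mul_comm]
  exact_mod_cast revision

/-- The Chu–Vandermonde evaluation of `₂F₁(-a, -k; N - k + 1; 1)`. -/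
lemma sum_choose_mul_choose_div_choose (a : ℕ) {k N : ℕ} (hkN : k ≤ N) :
    ∑ d ∈ range (k + 1), (a.choose d : K) * k.choose d / (N - (k - d)).choose d =
      ((a + N).choose k : K) / (N.choose k : K) := by
  rw [← sum_choose_mul_choose_sub a N k, Nat.cast_sum, sum_div]
  refine sum_congr rfl fun d hd => ?_
  rw [mul_div_assoc, choose_div_choose_sub (mem_range_succ_iff.mp hd) hkN, ← mul_div_assoc,
    Nat.cast_mul]

end Field

section Weights

variable {n k d : ℕ}

lemma Mdk_eq_choose_mul_choose_sq (hdk : d ≤ k) :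
    Mdk k d = (2 * k).choose k * k.choose d ^ 2 := by
  have key := choose_mul_choose_sub_mul_choose_sub (2 * k) d hdk
  rwa [Nat.sub_sub, ← two_mul, show 2 * k - k = k by omega, mul_assoc _ (k.choose d),
    ← sq] at key

lemma Mdk_pos (hdk : d ≤ k) : 0 < Mdk k d := by
  rw [Mdk_eq_choose_mul_choose_sq hdk]
  exact mul_pos (Nat.choose_pos (by omega)) (pow_pos (Nat.choose_pos hdk) 2)

lemma Nd_pos (n k d : ℕ) : 0 < Nd n k d :=
  Nat.choose_pos (Nat.le_add_left d _)

lemma sum_Mdk_div_Nd (hn : 2 * k ≤ n) :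
    ∑ d ∈ range (k + 1), (Mdk k d : ℝ) / (Nd n k d : ℝ) =
      (n.choose k : ℝ) * ((2 * k).choose k : ℝ) / ((n - k).choose k : ℝ) := by
  have term (d : ℕ) (hd : d ∈ range (k + 1)) : (Mdk k d : ℝ) / (Nd n k d : ℝ) =
      (2 * k).choose k *
        ((k.choose d : ℝ) * k.choose d / ((n - k) - (k - d)).choose d) := by
    have hdk : d ≤ k := mem_range_succ_iff.mp hd
    rw [Mdk_eq_choose_mul_choose_sq hdk, Nd, show n - 2 * k + d = n - k - (k - d) by omega]
    push_cast
    ring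
  rw [sum_congr rfl term, ← mul_sum,
    sum_choose_mul_choose_div_choose k (show k ≤ n - k by omega),
    show k + (n - k) = n by omega]
  ring

lemma wgt_of_ne_zero (n k : ℕ) (hd : d ≠ 0) :
    wgt n k d = (n.choose (2 * k) : ℝ) * ((n.choose k : ℝ)⁻¹) ^ 2 *
      ((Mdk k d : ℝ) / (Nd n k d : ℝ)) := by
  rw [wgt, if_neg hd, mul_div_assoc]

lemma wgt_zero (hkn : k ≤ n) :
    wgt n k 0 = (n.choose (2 * k) : ℝ) * ((n.choose k : ℝ)⁻¹) ^ 2 *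
      ((Mdk k 0 : ℝ) / (Nd n k 0 : ℝ) -
        (n.choose k : ℝ) * ((2 * k).choose k : ℝ) / ((n - k).choose k : ℝ)) := by
  have hnk : (n.choose k : ℝ) ≠ 0 := Nat.cast_ne_zero.mpr (Nat.choose_ne_zero hkn)
  have term_zero : (Mdk k 0 : ℝ) / (Nd n k 0 : ℝ) = (2 * k).choose k := by simp [Mdk, Nd]
  rw [term_zero, wgt, if_pos rfl]
  field_simp

lemma sum_wgt (hkn : k ≤ n) :
    ∑ d ∈ range (k + 1), wgt n k d = (n.choose (2 * k) : ℝ) * ((n.choose k : ℝ)⁻¹) ^ 2 *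
      (∑ d ∈ range (k + 1), (Mdk k d : ℝ) / (Nd n k d : ℝ) -
        (n.choose k : ℝ) * ((2 * k).choose k : ℝ) / ((n - k).choose k : ℝ)) := by
  rw [sum_range_succ', sum_range_succ', wgt_zero hkn,
    sum_congr rfl fun d _ => wgt_of_ne_zero n k d.succ_ne_zero, ← mul_sum]
  ring

lemma sum_wgt_eq_zero (hn : 2 * k ≤ n) : ∑ d ∈ range (k + 1), wgt n k d = 0 := by
  rw [sum_wgt (by omega), sum_Mdk_div_Nd hn, sub_self, mul_zero]

lemma wgt_pos (hn : 2 * k ≤ n) (hd : d ∈ Icc 1 k) : 0 < wgt n k d := by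
  obtain ⟨one_le_d, hdk⟩ := mem_Icc.mp hd
  have hM : (0 : ℝ) < Mdk k d := Nat.cast_pos.mpr (Mdk_pos hdk)
  have hN : (0 : ℝ) < Nd n k d := Nat.cast_pos.mpr (Nd_pos n k d)
  have hn2k : (0 : ℝ) < n.choose (2 * k) := Nat.cast_pos.mpr (Nat.choose_pos hn)
  have hnk : (0 : ℝ) < n.choose k := Nat.cast_pos.mpr (Nat.choose_pos (by omega))
  rw [wgt_of_ne_zero n k (by omega)]
  positivity

lemma wgt_zero_neg (hk : 1 ≤ k) (hn : 2 * k ≤ n) : wgt n k 0 < 0 := by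
  have tail_pos : 0 < ∑ d ∈ range k, wgt n k (d + 1) :=
    sum_pos (fun d hd => wgt_pos hn (mem_Icc.mpr ⟨d.succ_pos, mem_range.mp hd⟩))
      (nonempty_range_iff.mpr (by omega))
  have total := sum_wgt_eq_zero hn
  rw [sum_range_succ'] at total
  linarith

end Weights

theorem weights_sum_zero_and_signs (n k : ℕ) (hk : 1 ≤ k) (hn : 2 * k ≤ n) :
    (∑ d ∈ Finset.range (k + 1), wgt n k d = 0) ∧
    (∀ d ∈ Finset.Icc 1 k, 0 < wgt n k d) ∧
    (wgt n k 0 < 0) ∧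
    (∑ d ∈ Finset.range (k + 1), (Mdk k d : ℝ) / (Nd n k d : ℝ)
        = (n.choose k : ℝ) * ((2 * k).choose k : ℝ) / ((n - k).choose k : ℝ)) :=
  ⟨sum_wgt_eq_zero hn, fun _ => wgt_pos hn, wgt_zero_neg hk hn, sum_Mdk_div_Nd hn⟩

end
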